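/- For every even permutation (i,j,k) of (1,2,3): Φ_i·ψ_0 = γ(ξ_j)(γ(ξ_k)ψ_0); equivalently, (Φ_i − ξ_j·ξ_k)·ψ_0 = 0. -/

import Mathlib

noncomputable section

/- Context: the spin representation in dimension 7, realized on
`Σ = Λ^•(ℂ³)`, modelled as `Finset (Fin 3) → ℂ` (coefficients with respect to
the orthonormal basis of monomials `y_{i₁} ∧ ⋯ ∧ y_{i_k}`, `i₁ < ⋯ < i_k`).
`cOp j` is wedging with `y_j`, `aOp j` is its adjoint, and `γ` is the Clifford
multiplication of `ℝ⁷` determined by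
`γ(e₁) = i` on even-degree and `-i` on odd-degree elements,
`γ(e_{2j}) = i(a_j + c_j)`, `γ(e_{2j+1}) = c_j - a_j`.
Indices of `e₁,…,e₇` (resp. `y₁,y₂,y₃`) are shifted to `Fin 7` (resp. `Fin 3`),
so `e_s` is `estd (s-1)` and `y_j` corresponds to `j-1 : Fin 3`. -/

open Complex

/-- The spinor module `Σ = Λ^•(ℂ³)`, as coefficient functions on the monomial
basis indexed by subsets of `{1,2,3}`. -/
abbrev SpinorRep := Finset (Fin 3) → ℂ

/-- The sign `(-1)^{#{i ∈ S | i < j}}` arising when wedging `y_j` into the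
monomial indexed by `S`. -/
def csign (j : Fin 3) (S : Finset (Fin 3)) : ℂ := (-1 : ℂ) ^ (S.filter (· < j)).card

/-- Creation operator `c_j`: wedge product with `y_j`. -/
def cOp (j : Fin 3) : SpinorRep →ₗ[ℂ] SpinorRep where
  toFun ψ := fun S => if j ∈ S then csign j S * ψ (S.erase j) else 0
  map_add' ψ χ := by
    funext S
    by_cases h : j ∈ S <;> simp [h, mul_add]
  map_smul' c ψ := by
    funext S
    by_cases h : j ∈ S <;> simp [h] <;> ring

/-- Annihilation operator `a_j = c_j^*`: the adjoint of `c_j` with respect to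
the Hermitian inner product making the monomials orthonormal. -/
def aOp (j : Fin 3) : SpinorRep →ₗ[ℂ] SpinorRep where
  toFun ψ := fun S => if j ∈ S then 0 else csign j S * ψ (insert j S)
  map_add' ψ χ := by
    funext S
    by_cases h : j ∈ S <;> simp [h, mul_add]
  map_smul' c ψ := by
    funext S
    by_cases h : j ∈ S <;> simp [h] <;> ring

/-- `γ(e₁)`: multiplication by `i` on even-degree and by `-i` on odd-degree
elements. -/
def parityOp : SpinorRep →ₗ[ℂ] SpinorRep where
  toFun ψ := fun S => (if Even S.card then I else -I) * ψ S
  map_add' ψ χ := by funext S; simp [mul_add]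
  map_smul' c ψ := by funext S; simp; ring

/-- Clifford multiplication by the standard basis vectors `e₁,…,e₇` of `ℝ⁷`. -/
def gammaBasis : Fin 7 → (SpinorRep →ₗ[ℂ] SpinorRep)
  | 0 => parityOp
  | 1 => I • (aOp 0 + cOp 0)
  | 2 => cOp 0 - aOp 0
  | 3 => I • (aOp 1 + cOp 1)
  | 4 => cOp 1 - aOp 1
  | 5 => I • (aOp 2 + cOp 2)
  | 6 => cOp 2 - aOp 2

/-- Clifford multiplication `γ(v)` for `v ∈ ℝ⁷`. -/
def gamma (v : Fin 7 → ℝ) : SpinorRep →ₗ[ℂ] SpinorRep :=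
  ∑ s : Fin 7, (v s : ℂ) • gammaBasis s

/-- The index in `Fin 7` of the Reeb direction `ξ_i = e_i`, `i = 1,2,3`. -/
def xiIdx (i : Fin 3) : Fin 7 := ⟨i.val, by omega⟩

/-- The action of the fundamental 2-forms
`Φ₁ = -e^{23} - e^{45} - e^{67}`, `Φ₂ = e^{13} - e^{46} + e^{57}`,
`Φ₃ = -e^{12} - e^{47} - e^{56}` on spinors, via
`τ·ψ = Σ_{p<q} τ_{pq} γ(e_p)γ(e_q)ψ`. -/
def PhiOp : Fin 3 → (SpinorRep →ₗ[ℂ] SpinorRep)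
  | 0 => -(gammaBasis 1 ∘ₗ gammaBasis 2) - gammaBasis 3 ∘ₗ gammaBasis 4
         - gammaBasis 5 ∘ₗ gammaBasis 6
  | 1 => gammaBasis 0 ∘ₗ gammaBasis 2 - gammaBasis 3 ∘ₗ gammaBasis 5
         + gammaBasis 4 ∘ₗ gammaBasis 6
  | 2 => -(gammaBasis 0 ∘ₗ gammaBasis 1) - gammaBasis 3 ∘ₗ gammaBasis 6
         - gammaBasis 4 ∘ₗ gammaBasis 5

/-- The canonical spinor `ψ₀ = (y₂ ∧ y₃ + i y₁)/√2`. -/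
def psi0 : SpinorRep := fun S =>
  if S = ({1, 2} : Finset (Fin 3)) then (Real.sqrt 2 : ℂ)⁻¹
  else if S = ({0} : Finset (Fin 3)) then I * (Real.sqrt 2 : ℂ)⁻¹
  else 0

/-- The auxiliary spinors `ψ_i = ξ_i · ψ₀`, `i = 1,2,3`. -/
def psiAux (i : Fin 3) : SpinorRep := gammaBasis (xiIdx i) psi0

/- Write `N` for the degree operator. In terms of creation and annihilation operators
`Φ₁ = i(2N - 3)`, and the parts of `Φ₂` and `Φ₃` involving only `e₄,…,e₇` are `2(a₂a₃ + c₂c₃)`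
and `2i(a₂a₃ - c₂c₃)`. The canonical spinor is chosen so that `a₂a₃ψ₀ = i a₁ψ₀` and
`c₂c₃ψ₀ = i c₁ψ₀`, which turns these parts into `2ξ₂` and `2ξ₃` on `ψ₀`. As moreover
`ξ₂ξ₃ψ₀ = ξ₁ψ₀`, and the Clifford relations allow rotating this identity cyclically, both sides
of the theorem are equal to `ξ_i·ψ₀`. -/

section Ring

variable {A : Type*} [Ring A]

theorem sub_mul_self_eq_neg_one {a c : A} (ha : a * a = 0) (hc : c * c = 0)
    (hac : a * c + c * a = 1) : (c - a) * (c - a) = -1 := by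
  rw [← hac, sub_mul, mul_sub, mul_sub, ha, hc]
  abel

variable [Algebra ℂ A] {a c : A}

theorem I_smul_add_mul_self (ha : a * a = 0) (hc : c * c = 0) (hac : a * c + c * a = 1) :
    (I • (a + c)) * (I • (a + c)) = -1 := by
  have hsq : (a + c) * (a + c) = 1 := by
    rw [← hac, add_mul, mul_add, mul_add, ha, hc, zero_add, add_zero]
  rw [smul_mul_smul_comm, I_mul_I, hsq, neg_one_smul]

theorem I_smul_add_mul_sub (ha : a * a = 0) (hc : c * c = 0) :
    (I • (a + c)) * (c - a) = I • (a * c - c * a) := by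
  rw [smul_mul_assoc, add_mul, mul_sub, mul_sub, ha, hc, sub_zero, zero_sub, sub_eq_add_neg]

theorem sub_mul_sub_sub_I_smul_add_mul (a c a' c' : A) :
    (c - a) * (c' - a') - (I • (a + c)) * (I • (a' + c')) = (2 : ℂ) • (a * a' + c * c') := by
  rw [smul_mul_smul_comm, I_mul_I, neg_one_smul, two_smul]
  noncomm_ring

theorem I_smul_add_mul_sub_add (a c a' c' : A) :
    (I • (a + c)) * (c' - a') + (c - a) * (I • (a' + c')) = (2 * I) • (c * c' - a * a') := by
  rw [smul_mul_assoc, mul_smul_comm, ← smul_add, mul_comm, mul_smul, two_smul]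
  congr 1
  noncomm_ring

end Ring

theorem clifford_rotate {R M : Type*} [Semiring R] [AddCommGroup M] [Module R M]
    {x y z : Module.End R M} {m : M} (hxx : x * x = -1) (hxz : x * z = -(z * x))
    (h : x (y m) = z m) : z (x m) = y m :=
  calc
    z (x m) = -((-(z * x)) m) := by simp
    _ = -((x * z) m) := by rw [hxz]
    _ = -((x * x) (y m)) := by simp [h]
    _ = y m := by simp [hxx]

section ParitySign

variable {α R : Type*} [DecidableEq α] [InvolutiveNeg R] {j : α} {S : Finset α}

theorem ite_even_card_insert (h : j ∉ S) (z : R) :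
    (if Even (insert j S).card then z else -z) = -(if Even S.card then z else -z) := by
  rw [Finset.card_insert_of_notMem h]
  by_cases hS : Even S.card <;> simp [Nat.even_add_one, hS]

theorem ite_even_card_erase (h : j ∈ S) (z : R) :
    (if Even (S.erase j).card then z else -z) = -(if Even S.card then z else -z) := by
  have hinsert := ite_even_card_insert (Finset.notMem_erase j S) z
  rw [Finset.insert_erase h] at hinsert
  rw [hinsert, neg_neg]

end ParitySign

section Fock

variable (j : Fin 3) (ψ : SpinorRep) (S : Finset (Fin 3))

theorem cOp_apply : cOp j ψ S = if j ∈ S then csign j S * ψ (S.erase j) else 0 := rfl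

theorem aOp_apply : aOp j ψ S = if j ∈ S then 0 else csign j S * ψ (insert j S) := rfl

theorem parityOp_apply : parityOp ψ S = (if Even S.card then I else -I) * ψ S := rfl

theorem csign_mul_self : csign j S * csign j S = 1 := by
  rw [csign, ← mul_pow, neg_one_mul, neg_neg, one_pow]

@[simp]
theorem csign_erase : csign j (S.erase j) = csign j S := by
  rw [csign, csign, Finset.filter_erase, Finset.erase_eq_of_notMem (by simp)]

@[simp]
theorem csign_insert : csign j (insert j S) = csign j S := by
  rw [csign, csign, Finset.filter_insert, if_neg (lt_irrefl j)]

theorem aOp_cOp_apply : aOp j (cOp j ψ) S = if j ∈ S then 0 else ψ S := by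
  by_cases h : j ∈ S <;> simp [aOp_apply, cOp_apply, h, ← mul_assoc, csign_mul_self]

theorem cOp_aOp_apply : cOp j (aOp j ψ) S = if j ∈ S then ψ S else 0 := by
  by_cases h : j ∈ S <;> simp [aOp_apply, cOp_apply, h, ← mul_assoc, csign_mul_self]

theorem cOp_mul_self : cOp j * cOp j = 0 := by
  refine LinearMap.ext fun ψ => funext fun S => ?_
  simp [cOp_apply]

theorem aOp_mul_self : aOp j * aOp j = 0 := by
  refine LinearMap.ext fun ψ => funext fun S => ?_
  simp [aOp_apply]

theorem aOp_mul_cOp_add_cOp_mul_aOp : aOp j * cOp j + cOp j * aOp j = 1 := by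
  refine LinearMap.ext fun ψ => funext fun S => ?_
  by_cases h : j ∈ S <;> simp [aOp_cOp_apply, cOp_aOp_apply, h]

theorem parityOp_mul_self : parityOp * parityOp = -1 := by
  refine LinearMap.ext fun ψ => funext fun S => ?_
  by_cases h : Even S.card <;> simp [parityOp_apply, h, ← mul_assoc]

theorem parityOp_mul_cOp_eq_neg : parityOp * cOp j = -(cOp j * parityOp) := by
  refine LinearMap.ext fun ψ => funext fun S => ?_
  simp only [Module.End.mul_apply, LinearMap.neg_apply, Pi.neg_apply, parityOp_apply, cOp_apply]
  by_cases hj : j ∈ S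
  · rw [if_pos hj, if_pos hj, ite_even_card_erase hj I]
    ring
  · simp [hj]

theorem parityOp_mul_aOp_eq_neg : parityOp * aOp j = -(aOp j * parityOp) := by
  refine LinearMap.ext fun ψ => funext fun S => ?_
  simp only [Module.End.mul_apply, LinearMap.neg_apply, Pi.neg_apply, parityOp_apply, aOp_apply]
  by_cases hj : j ∈ S
  · simp [hj]
  · rw [if_neg hj, if_neg hj, ite_even_card_insert hj I]
    ring

theorem I_smul_aOp_add_cOp_mul_sub_apply :
    ((I • (aOp j + cOp j)) * (cOp j - aOp j)) ψ S = (if j ∈ S then -I else I) * ψ S := by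
  rw [I_smul_add_mul_sub (aOp_mul_self j) (cOp_mul_self j)]
  by_cases h : j ∈ S <;> simp [aOp_cOp_apply, cOp_aOp_apply, h]

theorem cOp_single (z : ℂ) : cOp j (Pi.single S z) =
    if j ∈ S then 0 else Pi.single (insert j S) (csign j S * z) := by
  have hiff (T : Finset (Fin 3)) : j ∈ T ∧ T.erase j = S ↔ j ∉ S ∧ T = insert j S := by grind
  funext T
  rw [cOp_apply, Pi.single_apply, mul_ite, mul_zero, ← ite_and, if_congr (hiff T) rfl rfl]
  by_cases hj : j ∈ S
  · simp [hj]
  · by_cases hT : T = insert j S <;> simp [hj, hT]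

theorem aOp_single (z : ℂ) : aOp j (Pi.single S z) =
    if j ∈ S then Pi.single (S.erase j) (csign j S * z) else 0 := by
  have hiff (T : Finset (Fin 3)) : j ∉ T ∧ insert j T = S ↔ j ∈ S ∧ T = S.erase j := by grind
  funext T
  rw [aOp_apply, ← ite_not, Pi.single_apply, mul_ite, mul_zero, ← ite_and,
    if_congr (hiff T) rfl rfl]
  by_cases hj : j ∈ S
  · by_cases hT : T = S.erase j <;> simp [hj, hT]
  · simp [hj]

end Fock

section Clifford

theorem gammaBasis_mul_self (s : Fin 7) : gammaBasis s * gammaBasis s = -1 := by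
  have hodd (j : Fin 3) : (I • (aOp j + cOp j)) * (I • (aOp j + cOp j)) = -1 :=
    I_smul_add_mul_self (aOp_mul_self j) (cOp_mul_self j) (aOp_mul_cOp_add_cOp_mul_aOp j)
  have heven (j : Fin 3) : (cOp j - aOp j) * (cOp j - aOp j) = -1 :=
    sub_mul_self_eq_neg_one (aOp_mul_self j) (cOp_mul_self j) (aOp_mul_cOp_add_cOp_mul_aOp j)
  match s with
  | 0 => exact parityOp_mul_self
  | 1 => exact hodd 0
  | 2 => exact heven 0
  | 3 => exact hodd 1
  | 4 => exact heven 1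
  | 5 => exact hodd 2
  | 6 => exact heven 2

theorem gammaBasis_zero_mul_eq_neg {s : Fin 7} (hs : s ≠ 0) :
    gammaBasis 0 * gammaBasis s = -(gammaBasis s * gammaBasis 0) := by
  have hodd (j : Fin 3) :
      parityOp * (I • (aOp j + cOp j)) = -((I • (aOp j + cOp j)) * parityOp) := by
    rw [mul_smul_comm, smul_mul_assoc, mul_add, add_mul, parityOp_mul_aOp_eq_neg,
      parityOp_mul_cOp_eq_neg, ← neg_add, smul_neg]
  have heven (j : Fin 3) : parityOp * (cOp j - aOp j) = -((cOp j - aOp j) * parityOp) := by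
    rw [mul_sub, sub_mul, parityOp_mul_aOp_eq_neg, parityOp_mul_cOp_eq_neg, neg_sub_neg, neg_sub]
  match s with
  | 0 => exact absurd rfl hs
  | 1 => exact hodd 0
  | 2 => exact heven 0
  | 3 => exact hodd 1
  | 4 => exact heven 1
  | 5 => exact hodd 2
  | 6 => exact heven 2

theorem PhiOp_zero_apply (ψ : SpinorRep) (S : Finset (Fin 3)) :
    PhiOp 0 ψ S = I * (2 * S.card - 3) * ψ S := by
  have hcard : (S.card : ℂ) = ∑ j : Fin 3, if j ∈ S then 1 else 0 := by simp
  calc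
    PhiOp 0 ψ S = -((if 0 ∈ S then -I else I) * ψ S) - (if 1 ∈ S then -I else I) * ψ S
        - (if 2 ∈ S then -I else I) * ψ S := by
      simp only [← I_smul_aOp_add_cOp_mul_sub_apply]
      rfl
    _ = I * (2 * S.card - 3) * ψ S := by
      rw [hcard, Fin.sum_univ_three]
      split_ifs <;> ring

theorem PhiOp_one_eq_add :
    PhiOp 1 = gammaBasis 0 * gammaBasis 2 + (2 : ℂ) • (aOp 1 * aOp 2 + cOp 1 * cOp 2) := by
  rw [← sub_mul_sub_sub_I_smul_add_mul, add_sub, add_sub_right_comm]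
  rfl

theorem PhiOp_two_eq_sub :
    PhiOp 2 = -(gammaBasis 0 * gammaBasis 1) - (2 * I) • (cOp 1 * cOp 2 - aOp 1 * aOp 2) := by
  rw [← I_smul_add_mul_sub_add, ← sub_sub]
  rfl

end Clifford

section CanonicalSpinor

theorem psi0_eq_single_add_single :
    psi0 = Pi.single {1, 2} (Real.sqrt 2 : ℂ)⁻¹ + Pi.single {0} (I * (Real.sqrt 2 : ℂ)⁻¹) := by
  funext S
  unfold psi0
  split_ifs with h h'
  · subst h; simp +decide
  · subst h'; simp +decide
  · simp [h, h']

theorem mul_psi0_congr {f g : Finset (Fin 3) → ℂ} (h₁₂ : f {1, 2} = g {1, 2})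
    (h₀ : f {0} = g {0}) (S : Finset (Fin 3)) : f S * psi0 S = g S * psi0 S := by
  unfold psi0
  split_ifs with h h'
  · rw [h, h₁₂]
  · rw [h', h₀]
  · rw [mul_zero, mul_zero]

theorem aOp_one_aOp_two_psi0 : aOp 1 (aOp 2 psi0) = I • aOp 0 psi0 := by
  have hset : (({1, 2} : Finset (Fin 3)).erase 2).erase 1 = ∅ := by decide
  simp +decide [psi0_eq_single_add_single, aOp_single, csign, hset, ← Pi.single_smul, ← mul_assoc]

theorem cOp_one_cOp_two_psi0 : cOp 1 (cOp 2 psi0) = I • cOp 0 psi0 := by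
  have hset : ({1, 2, 0} : Finset (Fin 3)) = {0, 1, 2} := by decide
  simp +decide [psi0_eq_single_add_single, cOp_single, csign, hset, ← Pi.single_smul]

theorem gammaBasis_one_gammaBasis_two_psi0 :
    gammaBasis 1 (gammaBasis 2 psi0) = gammaBasis 0 psi0 := by
  funext S
  refine (I_smul_aOp_add_cOp_mul_sub_apply 0 psi0 S).trans ?_
  exact mul_psi0_congr (f := fun S => if 0 ∈ S then -I else I)
    (g := fun S => if Even S.card then I else -I) (by simp) (by simp) S

theorem gammaBasis_zero_gammaBasis_one_psi0 :
    gammaBasis 0 (gammaBasis 1 psi0) = gammaBasis 2 psi0 :=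
  clifford_rotate (gammaBasis_mul_self 1)
    (by rw [gammaBasis_zero_mul_eq_neg one_ne_zero, neg_neg]) gammaBasis_one_gammaBasis_two_psi0

theorem gammaBasis_two_gammaBasis_zero_psi0 :
    gammaBasis 2 (gammaBasis 0 psi0) = gammaBasis 1 psi0 :=
  clifford_rotate (gammaBasis_mul_self 0) (gammaBasis_zero_mul_eq_neg (by decide))
    gammaBasis_zero_gammaBasis_one_psi0

theorem gammaBasis_xiIdx_gammaBasis_xiIdx_psi0 (i : Fin 3) :
    gammaBasis (xiIdx (i + 1)) (gammaBasis (xiIdx (i + 2)) psi0) = psiAux i :=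
  match i with
  | 0 => gammaBasis_one_gammaBasis_two_psi0
  | 1 => gammaBasis_two_gammaBasis_zero_psi0
  | 2 => gammaBasis_zero_gammaBasis_one_psi0

theorem PhiOp_zero_psi0 : PhiOp 0 psi0 = gammaBasis 0 psi0 := by
  funext S
  rw [PhiOp_zero_apply]
  exact mul_psi0_congr (f := fun S => I * (2 * S.card - 3))
    (g := fun S => if Even S.card then I else -I) (by simp; ring) (by simp; ring) S

theorem PhiOp_one_psi0 : PhiOp 1 psi0 = gammaBasis 1 psi0 := by
  have hvert : (gammaBasis 0 * gammaBasis 2) psi0 = -gammaBasis 1 psi0 := by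
    rw [gammaBasis_zero_mul_eq_neg (by decide), LinearMap.neg_apply, Module.End.mul_apply,
      gammaBasis_two_gammaBasis_zero_psi0]
  have hhor : (aOp 1 * aOp 2 + cOp 1 * cOp 2) psi0 = gammaBasis 1 psi0 := by
    rw [LinearMap.add_apply, Module.End.mul_apply, Module.End.mul_apply, aOp_one_aOp_two_psi0,
      cOp_one_cOp_two_psi0, ← smul_add]
    rfl
  rw [PhiOp_one_eq_add, LinearMap.add_apply, LinearMap.smul_apply, hvert, hhor]
  module

theorem PhiOp_two_psi0 : PhiOp 2 psi0 = gammaBasis 2 psi0 := by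
  have hhor : (cOp 1 * cOp 2 - aOp 1 * aOp 2) psi0 = I • gammaBasis 2 psi0 := by
    rw [LinearMap.sub_apply, Module.End.mul_apply, Module.End.mul_apply, aOp_one_aOp_two_psi0,
      cOp_one_cOp_two_psi0, ← smul_sub]
    rfl
  rw [PhiOp_two_eq_sub, LinearMap.sub_apply, LinearMap.neg_apply, LinearMap.smul_apply,
    Module.End.mul_apply, gammaBasis_zero_gammaBasis_one_psi0, hhor, smul_smul, mul_assoc, I_mul_I]
  module

theorem PhiOp_psi0 (i : Fin 3) : PhiOp i psi0 = psiAux i :=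
  match i with
  | 0 => PhiOp_zero_psi0
  | 1 => PhiOp_one_psi0
  | 2 => PhiOp_two_psi0

end CanonicalSpinor

/-- For every even permutation `(i,j,k)` of `(1,2,3)`
(encoded cyclically as `(i, i+1, i+2)` with `i : Fin 3`):
`Φ_i·ψ₀ = ξ_j·(ξ_k·ψ₀)`; equivalently `(Φ_i - ξ_j·ξ_k)·ψ₀ = 0`. -/
theorem statement_14 (i : Fin 3) :
    PhiOp i psi0 = gammaBasis (xiIdx (i + 1)) (gammaBasis (xiIdx (i + 2)) psi0) := by
  rw [PhiOp_psi0, gammaBasis_xiIdx_gammaBasis_xiIdx_psi0]
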